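/- Every maximal Sidon set in F_2^6 is the image under some affine permutation of either M_{6a} = {0, e_1, e_2, e_3, e_4, e_5, e_6, e_1+e_2+e_3+e_4, e_1+e_2+e_5+e_6} (of size 9) or M_{6b} = {0, e_1, e_2, e_3, e_4, e_5, e_6, e_1+e_2+e_3+e_4+e_5+e_6} (of size 8), where e_1,...,e_6 is the standard basis of F_2^6. -/

import Mathlib

/-- A subset `M` of `𝔽₂ᵗ` is Sidon if `m₁+m₂ ≠ m₃+m₄` for pairwise distinct elements. -/
def IsSidon {t : ℕ} (M : Finset (Fin t → ZMod 2)) : Prop :=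
  ∀ m₁ ∈ M, ∀ m₂ ∈ M, ∀ m₃ ∈ M, ∀ m₄ ∈ M,
    (m₁ ≠ m₂ ∧ m₁ ≠ m₃ ∧ m₁ ≠ m₄ ∧ m₂ ≠ m₃ ∧ m₂ ≠ m₄ ∧ m₃ ≠ m₄) →
    m₁ + m₂ ≠ m₃ + m₄

/-- `M` is sum-free if `m₁+m₂ ≠ m₃` for all `m₁,m₂,m₃ ∈ M`. -/
def IsSumFree {t : ℕ} (M : Finset (Fin t → ZMod 2)) : Prop :=
  ∀ m₁ ∈ M, ∀ m₂ ∈ M, ∀ m₃ ∈ M, m₁ + m₂ ≠ m₃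

/-- A maximal Sidon set. -/
def IsMaximalSidon {t : ℕ} (M : Finset (Fin t → ZMod 2)) : Prop :=
  IsSidon M ∧ ∀ S : Finset (Fin t → ZMod 2), IsSidon S → M ⊆ S → S = M

/-- Maximum size of a Sidon set in `𝔽₂ᵗ`. -/
noncomputable def sMax (t : ℕ) : ℕ :=
  sSup {n : ℕ | ∃ M : Finset (Fin t → ZMod 2), IsSidon M ∧ M.card = n}

/-- 2-sums of `M`. -/
def twoSums {t : ℕ} (M : Finset (Fin t → ZMod 2)) : Finset (Fin t → ZMod 2) :=
  (M ×ˢ M).image fun p => p.1 + p.2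

/-- 2-star-sums of `M` (sums of two distinct elements). -/
def twoStarSums {t : ℕ} (M : Finset (Fin t → ZMod 2)) : Finset (Fin t → ZMod 2) :=
  ((M ×ˢ M).filter fun p => p.1 ≠ p.2).image fun p => p.1 + p.2

/-- 3-sums of `M`. -/
def threeSums {t : ℕ} (M : Finset (Fin t → ZMod 2)) : Finset (Fin t → ZMod 2) :=
  ((M ×ˢ M) ×ˢ M).image fun p => p.1.1 + p.1.2 + p.2

/-- 3-star-sums of `M` (sums of three pairwise distinct elements). -/
def threeStarSums {t : ℕ} (M : Finset (Fin t → ZMod 2)) : Finset (Fin t → ZMod 2) :=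
  (((M ×ˢ M) ×ˢ M).filter fun p => p.1.1 ≠ p.1.2 ∧ p.1.1 ≠ p.2 ∧ p.1.2 ≠ p.2).image
    fun p => p.1.1 + p.1.2 + p.2

/-- 4-sums of `M`. -/
def fourSums {t : ℕ} (M : Finset (Fin t → ZMod 2)) : Finset (Fin t → ZMod 2) :=
  (((M ×ˢ M) ×ˢ M) ×ˢ M).image fun p => p.1.1.1 + p.1.1.2 + p.1.2 + p.2

/-- The standard basis vectors of `𝔽₂ᵗ`. -/
def stdBasis {t : ℕ} (i : Fin t) : Fin t → ZMod 2 := Pi.single i 1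

/-- The maximal Sidon set `M₆ₐ` of size 9 in `𝔽₂⁶`. -/
def M6a : Finset (Fin 6 → ZMod 2) :=
  {0, stdBasis 0, stdBasis 1, stdBasis 2, stdBasis 3, stdBasis 4, stdBasis 5,
    stdBasis 0 + stdBasis 1 + stdBasis 2 + stdBasis 3,
    stdBasis 0 + stdBasis 1 + stdBasis 4 + stdBasis 5}

/-- The maximal Sidon set `M₆ᵦ` of size 8 in `𝔽₂⁶`. -/
def M6b : Finset (Fin 6 → ZMod 2) :=
  {0, stdBasis 0, stdBasis 1, stdBasis 2, stdBasis 3, stdBasis 4, stdBasis 5,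
    stdBasis 0 + stdBasis 1 + stdBasis 2 + stdBasis 3 + stdBasis 4 + stdBasis 5}

abbrev V6 := Fin 6 → ZMod 2

theorem v_add_self {t : ℕ} (x : Fin t → ZMod 2) : x + x = 0 := by
  funext i
  exact CharTwo.add_self_eq_zero (x i)

theorem v_sub {t : ℕ} (x y : Fin t → ZMod 2) : x - y = x + y := by
  funext i
  exact CharTwo.sub_eq_add (x i) (y i)

theorem v_add_cancel {t : ℕ} (x y : Fin t → ZMod 2) : x + (x + y) = y := by
  rw [← add_assoc, v_add_self, zero_add]

/-- In characteristic two it suffices to know that `a` differs from the three others. -/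
theorem sidon_contra {t : ℕ} {M : Finset (Fin t → ZMod 2)} (hM : IsSidon M)
    {a b c d : Fin t → ZMod 2} (ha : a ∈ M) (hb : b ∈ M) (hc : c ∈ M) (hd : d ∈ M)
    (hab : a ≠ b) (hac : a ≠ c) (had : a ≠ d) (h : a + b = c + d) : False := by
  refine hM a ha b hb c hc d hd ⟨hab, hac, had, ?_, ?_, ?_⟩ h
  · rintro rfl
    exact had (add_right_cancel (by rw [h, add_comm]))
  · rintro rfl
    exact hac (add_right_cancel h)
  · rintro rfl
    rw [v_add_self] at h
    exact hab (by rw [← sub_eq_zero, v_sub, h])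

/-- A linear permutation followed by a translation preserves the Sidon property. -/
theorem sidon_image {M : Finset V6} (hM : IsSidon M) (L : V6 ≃ₗ[ZMod 2] V6) (a : V6) :
    IsSidon (Finset.image (fun x => L x + a) M) := by
  intro m₁ h₁ m₂ h₂ m₃ h₃ m₄ h₄ hne h
  simp only [Finset.mem_image] at h₁ h₂ h₃ h₄
  obtain ⟨x₁, h₁, rfl⟩ := h₁
  obtain ⟨x₂, h₂, rfl⟩ := h₂
  obtain ⟨x₃, h₃, rfl⟩ := h₃
  obtain ⟨x₄, h₄, rfl⟩ := h₄
  obtain ⟨n₁, n₂, n₃, n₄, n₅, n₆⟩ := hne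
  refine hM x₁ h₁ x₂ h₂ x₃ h₃ x₄ h₄ ⟨fun e => n₁ (by rw [e]), fun e => n₂ (by rw [e]),
    fun e => n₃ (by rw [e]), fun e => n₄ (by rw [e]), fun e => n₅ (by rw [e]),
    fun e => n₆ (by rw [e])⟩ ?_
  apply L.injective
  rw [map_add, map_add]
  have hsum : L x₁ + L x₂ + (a + a) = L x₃ + L x₄ + (a + a) := by
    calc _ = L x₁ + a + (L x₂ + a) := by abel
      _ = L x₃ + a + (L x₄ + a) := h
      _ = _ := by abel
  exact add_right_cancel hsum

/-- Every point is an affine (odd) combination of the `p i`. -/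
def OddSpan (p : Fin 7 → V6) : Prop :=
  ∀ x : V6, ∃ f : Fin 7 → ZMod 2, ∑ i, f i = 1 ∧ x = ∑ i, f i • p i

/-- A maximal Sidon set contains an affine frame of the whole space. -/
theorem exists_frame (M : Finset V6) (hM : IsMaximalSidon M) :
    ∃ p : Fin 7 → V6, Function.Injective p ∧ (∀ i, p i ∈ M) ∧ OddSpan p := by
  obtain ⟨hS, hmax⟩ := hM
  have hne : M.Nonempty := by
    by_contra h
    rw [Finset.not_nonempty_iff_eq_empty] at h
    subst h
    have := hmax {0} (by
      intro a ha b hb c _ d _ hh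
      simp only [Finset.mem_singleton] at ha hb
      exact absurd (ha.trans hb.symm) hh.1) (by simp)
    simp at this
  obtain ⟨m, hm⟩ := hne
  set D : Set V6 := {x | m + x ∈ M} with hD
  have hspan : Submodule.span (ZMod 2) D = ⊤ := by
    by_contra hcon
    obtain ⟨x, hx⟩ : ∃ x, x ∉ Submodule.span (ZMod 2) D := by
      by_contra! h
      exact hcon (Submodule.eq_top_iff'.mpr h)
    have key : ∀ a ∈ M, m + a ∈ Submodule.span (ZMod 2) D := fun a ha =>
      Submodule.subset_span (by rw [hD, Set.mem_ofPred_eq, v_add_cancel]; exact ha)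
    have key3 : ∀ a ∈ M, ∀ b ∈ M, ∀ c ∈ M, m + x ≠ a + b + c := by
      intro a ha b hb c hc h
      apply hx
      have h1 := Submodule.add_mem _ (Submodule.add_mem _ (key a ha) (key b hb)) (key c hc)
      have h2 : m + a + (m + b) + (m + c) = x := by
        calc m + a + (m + b) + (m + c) = (m + m) + (m + (a + b + c)) := by abel
          _ = x := by rw [← h, v_add_cancel, v_add_self, zero_add]
      rwa [h2] at h1
    have hxM : m + x ∉ M := by
      intro h
      exact key3 (m + x) h m hm m hm (by rw [add_assoc (m + x), v_add_self, add_zero])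
    have := hmax (insert (m + x) M) (by
      intro a ha b hb c hc d hd hh h
      rw [Finset.mem_insert] at ha hb hc hd
      obtain ⟨n₁, n₂, n₃, n₄, n₅, n₆⟩ := hh
      rcases ha with ha | ha
      · subst ha
        refine key3 b (hb.resolve_left n₁.symm) c (hc.resolve_left n₂.symm) d
          (hd.resolve_left n₃.symm) ?_
        rw [add_assoc, ← h, add_comm (m + x), v_add_cancel]
      rcases hb with hb | hb
      · subst hb
        refine key3 a ha c (hc.resolve_left n₄.symm) d (hd.resolve_left n₅.symm) ?_
        rw [add_assoc, ← h, v_add_cancel]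
      rcases hc with hc | hc
      · subst hc
        refine key3 d (hd.resolve_left n₆.symm) a ha b hb ?_
        rw [add_assoc, h, add_comm (m + x), v_add_cancel]
      rcases hd with hd | hd
      · subst hd
        refine key3 c hc a ha b hb ?_
        rw [add_assoc, h, v_add_cancel]
      exact hS a ha b hb c hc d hd ⟨n₁, n₂, n₃, n₄, n₅, n₆⟩ h) (Finset.subset_insert _ _)
    exact hxM (this ▸ Finset.mem_insert_self _ _)
  obtain ⟨f, hfD, hfs, hfi⟩ := Submodule.exists_fun_fin_finrank_span_eq (ZMod 2) D
  have hfr : Module.finrank (ZMod 2) (Submodule.span (ZMod 2) D) = 6 := by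
    rw [hspan, finrank_top]
    simp
  replace hfs := hfs.trans hspan
  generalize Module.finrank (ZMod 2) (Submodule.span (ZMod 2) D) = n at f hfD hfs hfi hfr
  subst hfr
  refine ⟨Fin.cons m (fun i => m + f i), ?_, ?_, ?_⟩
  · rw [Fin.cons_injective_iff]
    refine ⟨?_, fun i j h => hfi.injective (add_left_cancel h)⟩
    rintro ⟨i, hi⟩
    exact hfi.ne_zero i (by simpa using hi)
  · intro i
    refine Fin.cases ?_ (fun j => ?_) i
    · simpa using hm
    · have h : m + f j ∈ M := hfD j
      simpa using h
  · intro x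
    have hx : m + x ∈ Submodule.span (ZMod 2) (Set.range f) := hfs ▸ Submodule.mem_top
    obtain ⟨c, hc⟩ := (Submodule.mem_span_range_iff_exists_fun _).1 hx
    refine ⟨Fin.cons (1 + ∑ i, c i) c, ?_, ?_⟩
    · rw [Fin.sum_univ_succ]
      simp only [Fin.cons_zero, Fin.cons_succ]
      rw [add_assoc, CharTwo.add_self_eq_zero, add_zero]
    · rw [Fin.sum_univ_succ]
      simp only [Fin.cons_zero, Fin.cons_succ, smul_add, Finset.sum_add_distrib, hc,
        ← Finset.sum_smul]
      rw [add_smul, one_smul]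
      calc x = m + (m + x) := (v_add_cancel _ _).symm
        _ = _ := by
          rw [add_assoc, ← add_assoc (_ • m) (_ • m), v_add_self, zero_add]

/-- The affine permutation attached to a frame. -/
theorem frame_equiv (p : Fin 7 → V6) (hp : OddSpan p) :
    ∃ L : V6 ≃ₗ[ZMod 2] V6, ∀ i : Fin 6, L (stdBasis i) = p i.succ + p 0 := by
  let b : Fin 6 → V6 := fun i => p i.succ + p 0
  let L₀ : V6 →ₗ[ZMod 2] V6 := Fintype.linearCombination (ZMod 2) b
  have hsurj : Function.Surjective L₀ := by
    intro x
    obtain ⟨f, hf, hx⟩ := hp (x + p 0)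
    refine ⟨fun i => f i.succ, ?_⟩
    rw [Fin.sum_univ_succ] at hf hx
    have hf0 : ∑ i : Fin 6, f i.succ = f 0 + 1 := by
      rw [← hf, ← add_assoc, CharTwo.add_self_eq_zero, zero_add]
    simp only [L₀, Fintype.linearCombination_apply, b, smul_add, Finset.sum_add_distrib,
      ← Finset.sum_smul, hf0, add_smul, one_smul]
    apply add_right_cancel (b := p 0)
    rw [hx]
    calc _ = (f 0 • p 0 + ∑ i : Fin 6, f i.succ • p i.succ) + (p 0 + p 0) := by abel
      _ = _ := by rw [v_add_self, add_zero]
  refine ⟨LinearEquiv.ofBijective L₀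
    ⟨LinearMap.injective_iff_surjective.2 hsurj, hsurj⟩, fun i => ?_⟩
  change L₀ (stdBasis i) = p i.succ + p 0
  simp [L₀, stdBasis, b]

theorem oddSpan_perm (p : Fin 7 → V6) (hp : OddSpan p) (σ : Equiv.Perm (Fin 7)) :
    OddSpan (p ∘ σ) := by
  intro x
  obtain ⟨f, hf, hx⟩ := hp x
  refine ⟨f ∘ σ, ?_, ?_⟩
  · rw [← hf]
    exact Equiv.sum_comp σ f
  · rw [hx]
    exact (Equiv.sum_comp σ (fun i => f i • p i)).symm

/-- Which points may belong to a Sidon set containing a frame. -/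
theorem point_cases (M : Finset V6) (hM : IsSidon M) (p : Fin 7 → V6)
    (_hinj : Function.Injective p) (hpM : ∀ i, p i ∈ M) (hp : OddSpan p) (x : V6) (hx : x ∈ M)
    (hxp : ∀ i, x ≠ p i) :
    x = ∑ i, p i ∨ ∃ a b, a ≠ b ∧ x = ∑ i, p i + p a + p b := by
  obtain ⟨f, hf, hxf⟩ := hp x
  set S : Finset (Fin 7) := Finset.univ.filter (fun i => f i = 1) with hS
  have hfi : ∀ i, f i = if i ∈ S then 1 else 0 := by
    intro i
    simp only [hS, Finset.mem_filter, Finset.mem_univ, true_and]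
    generalize f i = y
    revert y
    decide
  have hxS : x = ∑ i ∈ S, p i := by
    rw [hxf]
    simp [hfi, ite_smul]
  have hodd : Odd S.card := by
    rw [← ZMod.natCast_eq_one_iff_odd, ← hf]
    simp [hfi]
  have hle : S.card ≤ 7 := by simpa using S.card_le_univ
  have hcompl : ∑ i ∈ S, p i = ∑ i, p i + ∑ i ∈ Sᶜ, p i := by
    rw [← Finset.sum_add_sum_compl S, add_assoc, v_add_self, add_zero]
  have hcc : Sᶜ.card = 7 - S.card := by simp [Finset.card_compl]
  have hc : S.card = 1 ∨ S.card = 3 ∨ S.card = 5 ∨ S.card = 7 := by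
    obtain ⟨k, hk⟩ := hodd
    omega
  rcases hc with hc | hc | hc | hc
  · obtain ⟨a, ha⟩ := Finset.card_eq_one.1 hc
    rw [ha, Finset.sum_singleton] at hxS
    exact absurd hxS (hxp a)
  · obtain ⟨a, b, c, hab, hac, hbc, ha⟩ := Finset.card_eq_three.1 hc
    rw [ha, Finset.sum_insert (by simp [hab, hac]), Finset.sum_pair hbc] at hxS
    exact (sidon_contra hM hx (hpM a) (hpM b) (hpM c) (hxp a) (hxp b) (hxp c)
      (by rw [hxS, add_comm, v_add_cancel])).elim
  · right
    rw [hc] at hcc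
    obtain ⟨a, b, hab, ha⟩ := Finset.card_eq_two.1 hcc
    refine ⟨a, b, hab, ?_⟩
    rw [hxS, hcompl, ha, Finset.sum_pair hab, add_assoc]
  · left
    rw [hc] at hcc
    rw [hxS, hcompl, Finset.card_eq_zero.1 hcc, Finset.sum_empty, add_zero]

theorem exists_perm (a b c d : Fin 7) (hab : a ≠ b) (hac : a ≠ c) (had : a ≠ d) (hbc : b ≠ c)
    (hbd : b ≠ d) (hcd : c ≠ d) :
    ∃ σ : Equiv.Perm (Fin 7), σ 5 = a ∧ σ 6 = b ∧ σ 3 = c ∧ σ 4 = d := by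
  have h := MulAction.isMultiplyPretransitive_iff.1
    (Equiv.Perm.isMultiplyPretransitive (Fin 7) 4)
  let x : Fin 4 ↪ Fin 7 := ⟨![5, 6, 3, 4], by decide⟩
  let y : Fin 4 ↪ Fin 7 := ⟨![a, b, c, d], by
    intro i j
    fin_cases i <;> fin_cases j <;> simp_all [Ne.symm]⟩
  obtain ⟨σ, hσ⟩ := h (x := x) (y := y)
  exact ⟨σ, congrArg (fun e => e 0) hσ, congrArg (fun e => e 1) hσ,
    congrArg (fun e => e 2) hσ, congrArg (fun e => e 3) hσ⟩

theorem mem_imgA (p : Fin 7 → V6) (L : V6 ≃ₗ[ZMod 2] V6)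
    (hL : ∀ i : Fin 6, L (stdBasis i) = p i.succ + p 0) :
    (∀ i, p i ∈ Finset.image (fun x => L x + p 0) M6a) ∧
    ∑ i, p i + p 5 + p 6 ∈ Finset.image (fun x => L x + p 0) M6a ∧
    ∑ i, p i + p 3 + p 4 ∈ Finset.image (fun x => L x + p 0) M6a := by
  have e : ∀ q r : V6, q + r + r = q := fun q r => by rw [add_assoc, v_add_self, add_zero]
  have h0 := hL 0
  have h1 := hL 1
  have h2 := hL 2
  have h3 := hL 3
  have h4 := hL 4
  have h5 := hL 5
  simp only [Fin.reduceSucc] at h0 h1 h2 h3 h4 h5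
  simp only [M6a, Finset.image_insert, Finset.image_singleton, map_zero, zero_add, map_add,
    h0, h1, h2, h3, h4, h5, e, Finset.mem_insert, Finset.mem_singleton, Fin.sum_univ_seven]
  refine ⟨fun i => ?_, ?_, ?_⟩
  · fin_cases i <;> simp
  · iterate 7 right
    left
    generalize p 0 = a, p 1 = b, p 2 = c, p 3 = d, p 4 = f, p 5 = g, p 6 = h
    ext i
    simp only [Pi.add_apply]
    linear_combination (g i + h i) * CharTwo.two_eq_zero (R := ZMod 2) -
      2 * a i * CharTwo.two_eq_zero (R := ZMod 2)
  · iterate 8 right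
    generalize p 0 = a, p 1 = b, p 2 = c, p 3 = d, p 4 = f, p 5 = g, p 6 = h
    ext i
    simp only [Pi.add_apply]
    linear_combination (d i + f i - 2 * a i) * CharTwo.two_eq_zero (R := ZMod 2)

theorem mem_imgB (p : Fin 7 → V6) (L : V6 ≃ₗ[ZMod 2] V6)
    (hL : ∀ i : Fin 6, L (stdBasis i) = p i.succ + p 0) :
    (∀ i, p i ∈ Finset.image (fun x => L x + p 0) M6b) ∧
    ∑ i, p i ∈ Finset.image (fun x => L x + p 0) M6b := by
  have e : ∀ q r : V6, q + r + r = q := fun q r => by rw [add_assoc, v_add_self, add_zero]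
  have h0 := hL 0
  have h1 := hL 1
  have h2 := hL 2
  have h3 := hL 3
  have h4 := hL 4
  have h5 := hL 5
  simp only [Fin.reduceSucc] at h0 h1 h2 h3 h4 h5
  simp only [M6b, Finset.image_insert, Finset.image_singleton, map_zero, zero_add, map_add,
    h0, h1, h2, h3, h4, h5, e, Finset.mem_insert, Finset.mem_singleton, Fin.sum_univ_seven]
  refine ⟨fun i => ?_, ?_⟩
  · fin_cases i <;> simp
  · iterate 7 right
    generalize p 0 = a, p 1 = b, p 2 = c, p 3 = d, p 4 = f, p 5 = g, p 6 = h
    ext i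
    simp only [Pi.add_apply]
    linear_combination (- 3 * a i) * CharTwo.two_eq_zero (R := ZMod 2)

/-- Two points `T + pa + pb`, `T + pa + pc` cannot both lie in the set. -/
theorem no_share {M : Finset V6} (hM : IsSidon M) {p : Fin 7 → V6}
    (hpM : ∀ i, p i ∈ M) {x y T : V6} (hx : x ∈ M) (hy : y ∈ M)
    (hxp : ∀ i, x ≠ p i) (hxy : x ≠ y) {u v w : Fin 7}
    (ex : x = T + p u + p v) (ey : y = T + p u + p w) : False :=
  sidon_contra hM hx hy (hpM v) (hpM w) hxy (hxp v) (hxp w) (by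
    rw [ex, ey]
    calc T + p u + p v + (T + p u + p w) = (T + T) + (p u + p u) + (p v + p w) := by abel
      _ = _ := by rw [v_add_self, v_add_self, zero_add, zero_add])

/-- Two points outside the frame have the form `T + pa + pb`, `T + pc + pd` with
`a, b, c, d` distinct. -/
theorem second_point {M : Finset V6} (hM : IsSidon M) {p : Fin 7 → V6}
    (hinj : Function.Injective p) (hpM : ∀ i, p i ∈ M) (hp : OddSpan p)
    {x y : V6} (hx : x ∈ M) (hy : y ∈ M)
    (hxp : ∀ i, x ≠ p i) (hyp : ∀ i, y ≠ p i) (hxy : x ≠ y) {a b : Fin 7}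
    (ex : x = ∑ i, p i + p a + p b) :
    ∃ c d, a ≠ c ∧ a ≠ d ∧ b ≠ c ∧ b ≠ d ∧ c ≠ d ∧ y = ∑ i, p i + p c + p d := by
  rcases point_cases M hM p hinj hpM hp y hy hyp with ey | ⟨c, d, hcd, ey⟩
  · refine (sidon_contra hM hx hy (hpM a) (hpM b) hxy (hxp a) (hxp b) ?_).elim
    rw [ex, ey, add_comm, add_assoc (∑ i, p i), v_add_cancel]
  · have exswap := ex.trans (add_right_comm _ _ _)
    have eyswap := ey.trans (add_right_comm _ _ _)
    refine ⟨c, d, ?_, ?_, ?_, ?_, hcd, ey⟩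
    · rintro rfl
      exact no_share hM hpM hx hy hxp hxy ex ey
    · rintro rfl
      exact no_share hM hpM hx hy hxp hxy ex eyswap
    · rintro rfl
      exact no_share hM hpM hx hy hxp hxy exswap ey
    · rintro rfl
      exact no_share hM hpM hx hy hxp hxy exswap eyswap

/-- Three points outside the frame are impossible. -/
theorem no_third {M : Finset V6} (hM : IsSidon M) {p : Fin 7 → V6}
    (hinj : Function.Injective p) (hpM : ∀ i, p i ∈ M) (hp : OddSpan p)
    {x y z : V6} (hx : x ∈ M) (hy : y ∈ M) (hz : z ∈ M)
    (hxp : ∀ i, x ≠ p i) (hyp : ∀ i, y ≠ p i) (hzp : ∀ i, z ≠ p i) (hxy : x ≠ y)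
    (hxz : x ≠ z) (hyz : y ≠ z)
    (ex : x = ∑ i, p i + p 5 + p 6) (ey : y = ∑ i, p i + p 3 + p 4) : False := by
  obtain ⟨c, d, n₁, n₂, n₃, n₄, hcd, ez⟩ :=
    second_point hM hinj hpM hp hx hz hxp hzp hxz ex
  have h34 : (3 : Fin 7) ≠ c ∧ 3 ≠ d ∧ 4 ≠ c ∧ 4 ≠ d := by
    have ex3 := ey
    have ex3swap := ey.trans (add_right_comm _ _ _)
    have ez3swap := ez.trans (add_right_comm _ _ _)
    refine ⟨?_, ?_, ?_, ?_⟩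
    · rintro rfl
      exact no_share hM hpM hy hz hyp hyz ex3 ez
    · rintro rfl
      exact no_share hM hpM hy hz hyp hyz ex3 ez3swap
    · rintro rfl
      exact no_share hM hpM hy hz hyp hyz ex3swap ez
    · rintro rfl
      exact no_share hM hpM hy hz hyp hyz ex3swap ez3swap
  obtain ⟨k₁, k₂, k₃, k₄⟩ := h34
  have hg : ∃ g : Fin 7, p 0 + p 1 + p 2 = p c + p d + p g := by
    have : ∀ c d : Fin 7, (5 ≠ c ∧ 5 ≠ d ∧ 6 ≠ c ∧ 6 ≠ d ∧ 3 ≠ c ∧ 3 ≠ d ∧ 4 ≠ c ∧ 4 ≠ d ∧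
        c ≠ d) → (c = 0 ∧ d = 1) ∨ (c = 1 ∧ d = 0) ∨ (c = 0 ∧ d = 2) ∨ (c = 2 ∧ d = 0) ∨
        (c = 1 ∧ d = 2) ∨ (c = 2 ∧ d = 1) := by decide
    rcases this c d ⟨n₁, n₂, n₃, n₄, k₁, k₂, k₃, k₄, hcd⟩ with h | h | h | h | h | h <;>
      obtain ⟨rfl, rfl⟩ := h
    · exact ⟨2, by abel⟩
    · exact ⟨2, by abel⟩
    · exact ⟨1, by abel⟩
    · exact ⟨1, by abel⟩
    · exact ⟨0, by abel⟩
    · exact ⟨0, by abel⟩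
  obtain ⟨g, hg⟩ := hg
  refine sidon_contra hM hx hy hz (hpM g) hxy hxz (hxp g) ?_
  rw [ex, ey, ez, Fin.sum_univ_seven]
  have hT : p 0 + p 1 + p 2 + p 3 + p 4 + p 5 + p 6
      = p c + p d + p g + (p 3 + p 4 + p 5 + p 6) := by
    rw [← hg]
    abel
  rw [hT]
  generalize p 3 = a₃, p 4 = a₄, p 5 = a₅, p 6 = a₆, p c = q, p d = r, p g = s
  ext i
  simp only [Pi.add_apply]
  linear_combination (a₃ i + a₄ i + a₅ i + a₆ i) * CharTwo.two_eq_zero (R := ZMod 2)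

/-- A Sidon set containing a frame lies in one of the two model sets. -/
theorem sidon_subset (M : Finset V6) (hM : IsSidon M) (p : Fin 7 → V6)
    (hinj : Function.Injective p) (hpM : ∀ i, p i ∈ M) (hp : OddSpan p) :
    ∃ (L : V6 ≃ₗ[ZMod 2] V6) (a : V6),
      M ⊆ Finset.image (fun x => L x + a) M6a ∨ M ⊆ Finset.image (fun x => L x + a) M6b := by
  by_cases hex : ∃ x ∈ M, (∀ i, x ≠ p i) ∧ ∃ a b, a ≠ b ∧ x = ∑ i, p i + p a + p b
  · obtain ⟨x, hx, hxp, a, b, hab, ex⟩ := hex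
    obtain ⟨c, d, n₁, n₂, n₃, n₄, hcd, hy⟩ : ∃ c d, a ≠ c ∧ a ≠ d ∧ b ≠ c ∧ b ≠ d ∧ c ≠ d ∧
        ((∀ y ∈ M, (∀ i, y ≠ p i) → y = x) ∨
          ∃ y ∈ M, (∀ i, y ≠ p i) ∧ x ≠ y ∧ y = ∑ i, p i + p c + p d) := by
      by_cases hs : ∃ y ∈ M, (∀ i, y ≠ p i) ∧ x ≠ y
      · obtain ⟨y, hy, hyp, hxy⟩ := hs
        obtain ⟨c, d, n₁, n₂, n₃, n₄, hcd, ey⟩ :=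
          second_point hM hinj hpM hp hx hy hxp hyp hxy ex
        exact ⟨c, d, n₁, n₂, n₃, n₄, hcd, Or.inr ⟨y, hy, hyp, hxy, ey⟩⟩
      · have : ∀ a b : Fin 7, ∃ c d, a ≠ c ∧ a ≠ d ∧ b ≠ c ∧ b ≠ d ∧ c ≠ d := by decide
        obtain ⟨c, d, n₁, n₂, n₃, n₄, hcd⟩ := this a b
        refine ⟨c, d, n₁, n₂, n₃, n₄, hcd, Or.inl fun y hy hyp => ?_⟩
        by_contra hne
        exact hs ⟨y, hy, hyp, Ne.symm hne⟩
    obtain ⟨σ, s5, s6, s3, s4⟩ := exists_perm a b c d hab n₁ n₂ n₃ n₄ hcd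
    have hsum : ∑ i, p i = ∑ i, (p ∘ σ) i := (Equiv.sum_comp σ p).symm
    have hq := oddSpan_perm p hp σ
    have hqinj : Function.Injective (p ∘ σ) := hinj.comp σ.injective
    have hqM : ∀ i, (p ∘ σ) i ∈ M := fun i => hpM _
    have hconv : ∀ {z : V6}, (∀ i, z ≠ p i) ↔ ∀ i, z ≠ (p ∘ σ) i := fun {z} =>
      ⟨fun h i => h _, fun h i => by simpa using h (σ.symm i)⟩
    have ea : p a = (p ∘ σ) 5 := by simp [s5]
    have eb : p b = (p ∘ σ) 6 := by simp [s6]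
    have ec : p c = (p ∘ σ) 3 := by simp [s3]
    have ed : p d = (p ∘ σ) 4 := by simp [s4]
    rw [hsum, ea, eb] at ex
    rw [hsum, ec, ed] at hy
    simp only [hconv] at hxp hy
    generalize p ∘ σ = q at *
    obtain ⟨L, hL⟩ := frame_equiv q hq
    obtain ⟨i₁, i₂, i₃⟩ := mem_imgA q L hL
    refine ⟨L, q 0, Or.inl fun z hz => ?_⟩
    by_cases hzp : ∀ i, z ≠ q i
    · by_cases hzx : z = x
      · rw [hzx, ex]
        exact i₂
      rcases hy with hy | ⟨y, hy, hyp, hxy, ey⟩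
      · exact absurd (hy z hz hzp) hzx
      · by_cases hzy : z = y
        · rw [hzy, ey]
          exact i₃
        · exact (no_third hM hqinj hqM hq hx hy hz hxp hyp hzp hxy (Ne.symm hzx)
            (Ne.symm hzy) ex ey).elim
    · push Not at hzp
      obtain ⟨i, rfl⟩ := hzp
      exact i₁ i
  · obtain ⟨L, hL⟩ := frame_equiv p hp
    obtain ⟨i₁, i₂⟩ := mem_imgB p L hL
    refine ⟨L, p 0, Or.inr fun z hz => ?_⟩
    by_cases hzp : ∀ i, z ≠ p i
    · rcases point_cases M hM p hinj hpM hp z hz hzp with h | h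
      · rw [h]
        exact i₂
      · exact absurd ⟨z, hz, hzp, h⟩ hex
    · push Not at hzp
      obtain ⟨i, rfl⟩ := hzp
      exact i₁ i

/-- Decode the binary digits of a number to a vector over the field with two elements. -/
def decV (n : ℕ) : V6 := fun i => if n.testBit i then 1 else 0

theorem decV_xor (a b : ℕ) : decV (a ^^^ b) = decV a + decV b := by
  funext i
  simp only [decV, Pi.add_apply, Nat.testBit_xor]
  cases a.testBit i <;> cases b.testBit i <;> decide

theorem decV_injective {a b : ℕ} (hla : a < 2 ^ 6) (hlb : b < 2 ^ 6) (h : decV a = decV b) :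
    a = b := by
  apply Nat.eq_of_testBit_eq
  intro i
  by_cases hi : i < 6
  · have hh := congrFun h ⟨i, hi⟩
    simp only [decV] at hh
    cases ha : a.testBit i <;> cases hb : b.testBit i <;> simp_all
  · have hpow : 2 ^ 6 ≤ 2 ^ i := Nat.pow_le_pow_right (by norm_num) (by omega)
    rw [Nat.testBit_lt_two_pow (hla.trans_le hpow), Nat.testBit_lt_two_pow (hlb.trans_le hpow)]

theorem sidon_of_codes (l : List ℕ) (M : Finset V6) (hlt : ∀ a ∈ l, a < 2 ^ 6)
    (hl : (l.all fun a => l.all fun b => Nat.beq a b || l.all fun c => Nat.beq a c ||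
      l.all fun d => Nat.beq a d || !Nat.beq (Nat.xor a b) (Nat.xor c d)) = true)
    (hM : ∀ x ∈ M, ∃ n ∈ l, decV n = x) : IsSidon M := by
  intro m₁ h₁ m₂ h₂ m₃ h₃ m₄ h₄ hne h
  obtain ⟨a, ha, rfl⟩ := hM _ h₁
  obtain ⟨b, hb, rfl⟩ := hM _ h₂
  obtain ⟨c, hc, rfl⟩ := hM _ h₃
  obtain ⟨d, hd, rfl⟩ := hM _ h₄
  obtain ⟨n₁, n₂, n₃, -⟩ := hne
  simp only [List.all_eq_true, Bool.or_eq_true, Nat.beq_eq, Bool.not_eq_true',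
    ← Bool.not_eq_true] at hl
  rcases hl a ha b hb with e | hl
  · exact n₁ (by rw [e])
  rcases hl c hc with e | hl
  · exact n₂ (by rw [e])
  rcases hl d hd with e | hl
  · exact n₃ (by rw [e])
  · have hab : a ^^^ b < 2 ^ 6 := Nat.xor_lt_two_pow (hlt a ha) (hlt b hb)
    have hcd : c ^^^ d < 2 ^ 6 := Nat.xor_lt_two_pow (hlt c hc) (hlt d hd)
    have heq : decV (a ^^^ b) = decV (c ^^^ d) := by rw [decV_xor, decV_xor, h]
    exact hl (decV_injective hab hcd heq)

theorem cardA : M6a.card = 9 := by decide +kernel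

theorem cardB : M6b.card = 8 := by decide +kernel

theorem sidonA : IsSidon M6a :=
  sidon_of_codes [0, 1, 2, 4, 8, 16, 32, 15, 51] M6a (by decide)
    (by decide +kernel) (by decide +kernel)

theorem sidonB : IsSidon M6b :=
  sidon_of_codes [0, 1, 2, 4, 8, 16, 32, 63] M6b (by decide)
    (by decide +kernel) (by decide +kernel)

theorem maximal_sidon_dim6 :
    M6a.card = 9 ∧ M6b.card = 8 ∧
    ∀ M : Finset (Fin 6 → ZMod 2), IsMaximalSidon M →
      ∃ (L : (Fin 6 → ZMod 2) ≃ₗ[ZMod 2] (Fin 6 → ZMod 2)) (a : Fin 6 → ZMod 2),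
        Finset.image (fun x => L x + a) M6a = M ∨
        Finset.image (fun x => L x + a) M6b = M := by
  refine ⟨cardA, cardB, fun M hM => ?_⟩
  obtain ⟨p, hinj, hpM, hp⟩ := exists_frame M hM
  obtain ⟨L, a, h | h⟩ := sidon_subset M hM.1 p hinj hpM hp
  · exact ⟨L, a, Or.inl (hM.2 _ (sidon_image sidonA L a) h)⟩
  · exact ⟨L, a, Or.inr (hM.2 _ (sidon_image sidonB L a) h)⟩
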